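/- arXiv:math/0604120 — 2 statements merged into one kernel-verified Lean document; each statement's English description precedes it below -/
import Mathlib

section
/- Let M be a II₁ factor with trace τ. For self-adjoint a, b ∈ M, ‖λ_a − λ_b‖_{L¹[0,1]} ≤ ‖a − b‖₁, where ‖x‖₁ = τ(|x|). -/
open scoped ComplexOrder

/- We model a II₁ factor abstractly: a unital C*-algebra `A` (with its canonical order)
together with a normalized faithful tracial state `τ` which has trivial center and
projections of every trace in `[0,1]`.  (Normality of `τ` and of the subalgebras is
implicit in the properties we record, e.g. right-continuity of spectral distributions.)
On bounded sets the σ-strong operator topology of a II₁ factor coincides with the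
topology of the trace norm `‖x‖₁ = τ(|x|)`; accordingly σ-strong closures of bounded
sets are formalized as `‖·‖₁`-closures. -/

variable {A : Type*} [CStarAlgebra A] [PartialOrder A] [StarOrderedRing A]

/-- A normalized faithful tracial state on a finite von Neumann algebra. -/
structure IsFiniteTrace (τ : A →ₗ[ℂ] ℂ) : Prop where
  tracial : ∀ x y : A, τ (x * y) = τ (y * x)
  pos : ∀ x : A, 0 ≤ x → 0 ≤ τ x
  faithful : ∀ x : A, 0 ≤ x → τ x = 0 → x = 0
  normalized : τ 1 = 1

/-- The trace of a II₁ factor: a normalized faithful tracial state on an algebra with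
trivial center and with projections of every trace `t ∈ [0,1]`. -/
structure IsII1Trace (τ : A →ₗ[ℂ] ℂ) extends IsFiniteTrace τ : Prop where
  factor : ∀ z : A, (∀ x : A, z * x = x * z) → ∃ c : ℂ, z = c • (1 : A)
  proj : ∀ t ∈ Set.Icc (0:ℝ) 1, ∃ p : A, IsSelfAdjoint p ∧ p * p = p ∧ τ p = (t : ℂ)

/-- `e s` is the spectral projection `p^a(-∞, s]` of the selfadjoint element `a`:
an increasing right-continuous (in trace) family of projections commuting with `a`,
below which `a ≤ s` and above which `a ≥ s`. -/
structure IsSpectralResolution (τ : A →ₗ[ℂ] ℂ) (a : A) (e : ℝ → A) : Prop where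
  selfAdjoint : ∀ s, IsSelfAdjoint (e s)
  idem : ∀ s, e s * e s = e s
  mono : Monotone e
  comm : ∀ s, a * e s = e s * a
  below : ∀ s : ℝ, a * e s ≤ (s : ℂ) • e s
  above : ∀ s : ℝ, (s : ℂ) • ((1 : A) - e s) ≤ a * ((1 : A) - e s)
  bot : ∀ s, s < -‖a‖ → e s = 0
  top : ∀ s, ‖a‖ ≤ s → e s = 1
  rightCont : ∀ s, ContinuousWithinAt (fun u => (τ (e u)).re) (Set.Ici s) s

/-- The spectral scale `λ_a(t) = min {s ∈ ℝ : τ(p^a(s,∞)) ≤ t}`, expressed through the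
resolution `e s = p^a(-∞,s]`, so that `τ(p^a(s,∞)) = 1 - τ(e s)`. -/
noncomputable def spectralScale (τ : A →ₗ[ℂ] ℂ) (e : ℝ → A) : ℝ → ℝ :=
  fun t => sInf {s : ℝ | 1 - (τ (e s)).re ≤ t}

/-- Spectral majorization `a ≺ b`: `τ(a) = τ(b)` and `∫₀ˢ λ_a ≤ ∫₀ˢ λ_b` for `s ∈ [0,1)`. -/
def IsSpecMajorizedBy (τ : A →ₗ[ℂ] ℂ) (a b : A) : Prop :=
  τ a = τ b ∧
    ∃ ea eb : ℝ → A, IsSpectralResolution τ a ea ∧ IsSpectralResolution τ b eb ∧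
      ∀ s ∈ Set.Ico (0:ℝ) 1,
        ∫ t in (0:ℝ)..s, spectralScale τ ea t ≤ ∫ t in (0:ℝ)..s, spectralScale τ eb t

/-- The trace norm `‖x‖₁ = τ(|x|)` (defined via continuous functional calculus). -/
noncomputable def traceNorm (τ : A →ₗ[ℂ] ℂ) (x : A) : ℝ :=
  (τ (cfc (fun r : ℝ => |r|) x)).re

/-- The trace-preserving conditional expectation onto a subalgebra `N`. -/
structure IsCondExp (τ : A →ₗ[ℂ] ℂ) (N : StarSubalgebra ℂ A) (E : A →ₗ[ℂ] A) : Prop where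
  mem : ∀ x : A, E x ∈ N
  fix : ∀ x ∈ N, E x = x
  pos : ∀ x : A, 0 ≤ x → 0 ≤ E x
  star_map : ∀ x : A, E (star x) = star (E x)
  trace : ∀ x : A, τ (E x) = τ x
  bimod : ∀ n ∈ N, ∀ x : A, E (n * x) = n * E x ∧ E (x * n) = E x * n

/-- The unitary orbit `U_M(b) = {u b u* : u unitary}`. -/
def unitaryOrbit (b : A) : Set A := {x | ∃ u ∈ unitary A, x = u * b * star u}

/-- `Ω_N(b)`: the selfadjoint elements of `N` spectrally majorized by `b`. -/
def Omega (τ : A →ₗ[ℂ] ℂ) (N : StarSubalgebra ℂ A) (b : A) : Set A :=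
  {a | a ∈ N ∧ IsSelfAdjoint a ∧ IsSpecMajorizedBy τ a b}

/-- The closure of a set in the trace-norm (`‖·‖₁`) topology; for bounded sets this is
the σ-strong closure. -/
def l1Closure (τ : A →ₗ[ℂ] ℂ) (S : Set A) : Set A :=
  {x | ∀ ε > (0:ℝ), ∃ y ∈ S, traceNorm τ (x - y) < ε}

/-- A diffuse von Neumann subalgebra: one with no minimal projections, i.e. every
nonzero projection strictly dominates a nonzero projection. -/
def IsDiffuse (N : StarSubalgebra ℂ A) : Prop :=
  ∀ p ∈ N, IsSelfAdjoint p → p * p = p → p ≠ 0 →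
    ∃ q ∈ N, IsSelfAdjoint q ∧ q * q = q ∧ q * p = q ∧ q ≠ 0 ∧ q ≠ p

/-- An abelian subalgebra. -/
def IsAbelian (N : StarSubalgebra ℂ A) : Prop := ∀ x ∈ N, ∀ y ∈ N, x * y = y * x

open MeasureTheory Set Polynomial

section TracialFunctional

variable {φ : A →L[ℝ] ℝ}

lemma apply_mul_le_of_le_smul_one (htr : ∀ x y : A, φ (x * y) = φ (y * x))
    (hpos : ∀ x : A, 0 ≤ x → 0 ≤ φ x) {p y : A} {M : ℝ} (hp : 0 ≤ p)
    (hy : y ≤ M • (1 : A)) : φ (p * y) ≤ M * φ p := by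
  obtain ⟨r, hr, rfl⟩ : ∃ r : A, IsSelfAdjoint r ∧ r * r = p :=
    ⟨CFC.sqrt p, (CFC.sqrt_nonneg p).isSelfAdjoint, CFC.sqrt_mul_sqrt_self p hp⟩
  have h := hpos _ (hr.conjugate_nonneg (sub_nonneg.2 hy))
  have h1 : φ (r * (M • (1 : A) - y) * r) = M * φ (r * r) - φ (r * r * y) := by
    rw [htr, ← mul_assoc, mul_sub, map_sub]
    simp
  linarith

lemma abs_apply_mul_le (htr : ∀ x y : A, φ (x * y) = φ (y * x))
    (hpos : ∀ x : A, 0 ≤ x → 0 ≤ φ x) {p y : A} {M : ℝ} (hp : 0 ≤ p)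
    (hy : IsSelfAdjoint y) (hM : ‖y‖ ≤ M) : |φ (p * y)| ≤ M * φ p := by
  have key : ∀ z : A, IsSelfAdjoint z → ‖z‖ ≤ M → z ≤ M • (1 : A) := fun z hz hzM ↦ by
    have := hz.le_algebraMap_norm_self
    rw [Algebra.algebraMap_eq_smul_one] at this
    exact this.trans (smul_le_smul_of_nonneg_right hzM zero_le_one)
  rw [abs_le]
  constructor
  · have := apply_mul_le_of_le_smul_one htr hpos hp (key (-y) hy.neg (by simpa using hM))
    simp at this
    linarith
  · exact apply_mul_le_of_le_smul_one htr hpos hp (key y hy hM)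

lemma apply_mul_le_apply_abs (htr : ∀ x y : A, φ (x * y) = φ (y * x))
    (hpos : ∀ x : A, 0 ≤ x → 0 ≤ φ x) {d y : A} {M : ℝ} (hd : IsSelfAdjoint d)
    (hy : y ≤ M • (1 : A)) (hy' : -y ≤ M • (1 : A)) :
    φ (d * y) ≤ M * φ (cfc (fun r : ℝ ↦ |r|) d) := by
  have h1 := apply_mul_le_of_le_smul_one htr hpos (CFC.posPart_nonneg d) hy
  have h2 := apply_mul_le_of_le_smul_one htr hpos (CFC.negPart_nonneg d) hy'
  have h3 : d⁺ * y + d⁻ * (-y) = d * y := by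
    rw [mul_neg, ← sub_eq_add_neg, ← sub_mul, CFC.posPart_sub_negPart d hd]
  have h4 : d⁺ + d⁻ = cfc (fun r : ℝ ↦ |r|) d := by
    rw [CFC.posPart_add_negPart d hd, CFC.abs_eq_cfc_norm d hd]
    rfl
  rw [← h3, ← h4, map_add, map_add]
  linarith

lemma aeval_le_smul_one {x : A} (hx : IsSelfAdjoint x) {R M : ℝ} (hxR : ‖x‖ ≤ R) (g : ℝ[X])
    (hg : ∀ s ∈ Icc (-R) R, g.eval s ≤ M) : aeval x g ≤ M • (1 : A) := by
  nontriviality A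
  rw [← cfc_polynomial g x hx, ← Algebra.algebraMap_eq_smul_one]
  refine cfc_le_algebraMap _ _ _ (fun s hs ↦ hg s ?_) (by fun_prop) hx
  have := spectrum.norm_le_norm_of_mem (𝕜 := ℝ) hs
  exact abs_le.1 ((Real.norm_eq_abs s ▸ this).trans hxR)

lemma hasDerivAt_apply_aeval {B : Type*} [CStarAlgebra B] {φ : B →L[ℝ] ℝ}
    (htr : ∀ x y : B, φ (x * y) = φ (y * x)) (b d : B) (G : ℝ[X])
    (t : ℝ) :
    HasDerivAt (fun t : ℝ ↦ φ (aeval (b + t • d) G))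
      (φ (d * aeval (b + t • d) (derivative G))) t := by
  induction G using Polynomial.induction_on' with
  | add p q hp hq => simpa [mul_add] using hp.fun_add hq
  | monomial n c =>
    have hx : HasDerivAt (fun t : ℝ ↦ b + t • d) d t := by
      simpa using ((hasDerivAt_id t).smul_const d).const_add b
    have h := (φ.hasFDerivAt.comp_hasDerivAt t (hx.fun_pow' n)).const_mul c
    have hsum : c * φ (∑ i ∈ Finset.range n,
        (b + t • d) ^ (n.pred - i) * d * (b + t • d) ^ i) =
        φ (d * aeval (b + t • d) (derivative (monomial n c))) := by
      rw [derivative_monomial, aeval_monomial, ← Algebra.smul_def, mul_smul_comm, map_smul,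
        map_sum, Finset.sum_congr rfl (g := fun _ ↦ φ (d * (b + t • d) ^ (n - 1)))]
      · simp [mul_assoc]
      · intro i hi
        have hi := Finset.mem_range.1 hi
        rw [mul_assoc, htr, mul_assoc, ← pow_add]
        congr 3
        simp only [Nat.pred_eq_sub_one]
        omega
    rw [hsum] at h
    refine h.congr_of_eventuallyEq (.of_forall fun s ↦ ?_)
    simp [aeval_monomial, ← Algebra.smul_def]

lemma apply_aeval_sub_le (htr : ∀ x y : A, φ (x * y) = φ (y * x))
    (hpos : ∀ x : A, 0 ≤ x → 0 ≤ φ x) {a b : A} (ha : IsSelfAdjoint a) (hb : IsSelfAdjoint b)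
    {R M : ℝ} (haR : ‖a‖ ≤ R) (hbR : ‖b‖ ≤ R) (G : ℝ[X])
    (hG : ∀ s ∈ Icc (-R) R, |(derivative G).eval s| ≤ M) :
    φ (aeval a G) - φ (aeval b G) ≤ M * φ (cfc (fun r : ℝ ↦ |r|) (a - b)) := by
  have hder := hasDerivAt_apply_aeval (φ := φ) htr b (a - b) G
  obtain ⟨t, ht, hteq⟩ := exists_hasDerivAt_eq_slope _ _ zero_lt_one
    (fun t _ ↦ (hder t).continuousAt.continuousWithinAt) (fun t _ ↦ hder t)
  simp only [one_smul, zero_smul, add_zero, add_sub_cancel, sub_zero, div_one] at hteq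
  rw [← hteq]
  have hx : IsSelfAdjoint (b + t • (a - b)) := hb.add (IsSelfAdjoint.smul (.all t) (ha.sub hb))
  have hxR : ‖b + t • (a - b)‖ ≤ R := by
    have h1 : b + t • (a - b) = (1 - t) • b + t • a := by module
    have ht1 : 0 ≤ 1 - t := by linarith [ht.2]
    rw [h1]
    refine (norm_add_le _ _).trans ?_
    rw [norm_smul, norm_smul, Real.norm_of_nonneg ht.1.le, Real.norm_of_nonneg ht1]
    nlinarith [ht.1]
  refine apply_mul_le_apply_abs htr hpos (ha.sub hb)
    (aeval_le_smul_one hx hxR _ fun s hs ↦ (abs_le.1 (hG s hs)).2) ?_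
  rw [← map_neg]
  refine aeval_le_smul_one hx hxR _ fun s hs ↦ ?_
  rw [eval_neg]
  linarith [(abs_le.1 (hG s hs)).1]

end TracialFunctional

lemma eq_of_abs_sub_le_mul_sub {K F : ℝ → ℝ} {C x y : ℝ} (hxy : x ≤ y)
    (h : ∀ s u, x ≤ s → s ≤ u → u ≤ y → |K u - K s| ≤ C * (u - s) * (F u - F s)) :
    K y = K x := by
  have bound (n : ℕ) : |K y - K x| ≤ C * (y - x) * (F y - F x) * (1 / ((n : ℝ) + 1)) := by
    set δ : ℝ := (y - x) / (n + 1) with hδ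
    have hδ0 : 0 ≤ δ := div_nonneg (sub_nonneg.2 hxy) (by positivity)
    have hδn : δ * (n + 1) = y - x := by rw [hδ]; field_simp
    have step (i : ℕ) (hi : i ≤ n + 1) :
        |K (x + i * δ) - K x| ≤ C * δ * (F (x + i * δ) - F x) := by
      induction i with
      | zero => simp
      | succ i ih =>
        have hi' : ((i + 1 : ℕ) : ℝ) ≤ n + 1 := by exact_mod_cast hi
        have h1 := h (x + i * δ) (x + (i + 1 : ℕ) * δ)
          (by nlinarith [(Nat.cast_nonneg i : (0 : ℝ) ≤ i)]) (by push_cast; linarith)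
          (by nlinarith)
        have h2 := ih (by omega)
        have h3 : x + (i + 1 : ℕ) * δ - (x + i * δ) = δ := by push_cast; ring
        rw [h3] at h1
        calc |K (x + (i + 1 : ℕ) * δ) - K x|
            ≤ |K (x + (i + 1 : ℕ) * δ) - K (x + i * δ)| + |K (x + i * δ) - K x| :=
              abs_sub_le _ _ _
          _ ≤ _ := by linarith
    have h4 := step (n + 1) le_rfl
    have h5 : x + ((n + 1 : ℕ) : ℝ) * δ = y := by push_cast; linarith
    rw [h5] at h4
    refine h4.trans_eq ?_
    rw [hδ]
    ring
  have hlim := (tendsto_one_div_add_atTop_nhds_zero_nat (𝕜 := ℝ)).const_mul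
    (C * (y - x) * (F y - F x))
  rw [mul_zero] at hlim
  have := ge_of_tendsto' hlim bound
  exact sub_eq_zero.1 (abs_nonpos_iff.1 this)

namespace IsSpectralResolution

variable {τ : A →ₗ[ℂ] ℂ} {a : A} {e : ℝ → A} {φ : A →L[ℝ] ℝ}

lemma mul_of_le (he : IsSpectralResolution τ a e) {s u : ℝ} (hsu : s ≤ u) :
    e s * e u = e s ∧ e u * e s = e s := by
  have hs : IsStarProjection (e s) := ⟨he.idem s, he.selfAdjoint s⟩
  have hu : IsStarProjection (e u) := ⟨he.idem u, he.selfAdjoint u⟩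
  exact ⟨(hs.le_iff_mul_eq_left hu).1 (he.mono hsu), (hs.le_iff_mul_eq_right hu).1 (he.mono hsu)⟩

lemma sub_smul_mem_Icc (he : IsSpectralResolution τ a e) {s u : ℝ} (hsu : s ≤ u) :
    a * (e u - e s) - s • (e u - e s) ∈ Icc 0 ((u - s) • (e u - e s)) := by
  obtain ⟨h1, h2⟩ := he.mul_of_le hsu
  have hs := he.idem s
  have hu := he.idem u
  have cu := he.comm u
  have hone : IsSelfAdjoint (1 - e s) := (IsSelfAdjoint.one A).sub (he.selfAdjoint s)
  have above := (he.selfAdjoint u).conjugate_nonneg (sub_nonneg.2 (he.above s))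
  have below := hone.conjugate_nonneg (sub_nonneg.2 (he.below u))
  have habove : e u * (a * (1 - e s) - (s : ℂ) • (1 - e s)) * e u =
      a * (e u - e s) - s • (e u - e s) := by
    have : e u * (1 - e s) * e u = e u - e s := by
      rw [mul_sub, sub_mul, mul_one, h2, h1, hu]
    rw [Complex.coe_smul, mul_sub, sub_mul, ← mul_assoc, ← cu, mul_assoc a, mul_assoc a, this,
      mul_smul_comm, smul_mul_assoc, this]
  have hbelow : (1 - e s) * ((u : ℂ) • e u - a * e u) * (1 - e s) =
      u • (e u - e s) - a * (e u - e s) := by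
    have h3 : (1 - e s) * e u * (1 - e s) = e u - e s := by
      rw [sub_mul, one_mul, h1, mul_sub, mul_one, sub_mul, h2, hs, sub_self, sub_zero]
    have h4 : (1 - e s) * a = a * (1 - e s) := by
      rw [sub_mul, mul_sub, he.comm s, one_mul, mul_one]
    rw [Complex.coe_smul, mul_sub (1 - e s), sub_mul _ _ (1 - e s), ← mul_assoc (1 - e s) a, h4,
      mul_assoc a, mul_assoc a, h3, mul_smul_comm, smul_mul_assoc, h3]
  rw [habove] at above
  rw [hbelow] at below
  refine ⟨above, ?_⟩
  rw [← sub_nonneg]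
  refine below.trans_eq ?_
  rw [sub_smul]
  abel

lemma exists_abs_apply_pow_mul_sub_le (htr : ∀ x y : A, φ (x * y) = φ (y * x))
    (hpos : ∀ x : A, 0 ≤ x → 0 ≤ φ x) (ha : IsSelfAdjoint a) (he : IsSpectralResolution τ a e)
    (R : ℝ) (n : ℕ) :
    ∃ C : ℝ, ∀ s u : ℝ, |s| ≤ R → s ≤ u →
      |φ (a ^ n * (e u - e s)) - s ^ n * φ (e u - e s)| ≤ C * (u - s) * φ (e u - e s) := by
  induction n with
  | zero => exact ⟨0, fun s u _ _ ↦ by simp⟩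
  | succ n ih =>
    obtain ⟨C, hC⟩ := ih
    refine ⟨‖a ^ n‖ + R * C, fun s u hs hsu ↦ ?_⟩
    obtain ⟨h0, h1⟩ := he.sub_smul_mem_Icc hsu
    have h2 := abs_apply_mul_le htr hpos h0 (ha.pow n) le_rfl
    have h3 : φ (a * (e u - e s) - s • (e u - e s)) ≤ (u - s) * φ (e u - e s) := by
      have := hpos _ (sub_nonneg.2 h1)
      rw [map_sub, map_smul, smul_eq_mul] at this
      linarith
    have h4 := mul_le_mul_of_nonneg_left h3 (norm_nonneg (a ^ n))
    have h5 : φ (a ^ (n + 1) * (e u - e s)) - s ^ (n + 1) * φ (e u - e s) =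
        φ ((a * (e u - e s) - s • (e u - e s)) * a ^ n) +
          s * (φ (a ^ n * (e u - e s)) - s ^ n * φ (e u - e s)) := by
      rw [htr (_ - _), mul_sub (a ^ n) (a * _), map_sub φ (a ^ n * _), mul_smul_comm,
        map_smul, smul_eq_mul, ← mul_assoc, ← pow_succ]
      ring
    have h6 : |s| * |φ (a ^ n * (e u - e s)) - s ^ n * φ (e u - e s)| ≤
        R * (C * (u - s) * φ (e u - e s)) :=
      mul_le_mul hs (hC s u hs hsu) (abs_nonneg _) ((abs_nonneg s).trans hs)
    rw [h5]
    refine (abs_add_le _ _).trans ?_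
    rw [abs_mul s]
    linarith

lemma apply_mono (hpos : ∀ x : A, 0 ≤ x → 0 ≤ φ x) (he : IsSpectralResolution τ a e) :
    Monotone fun s ↦ φ (e s) := fun s u hsu ↦ by
  have := hpos _ (sub_nonneg.2 (he.mono hsu))
  rw [map_sub] at this
  linarith

lemma apply_pow_eq (htr : ∀ x y : A, φ (x * y) = φ (y * x))
    (hpos : ∀ x : A, 0 ≤ x → 0 ≤ φ x) (ha : IsSelfAdjoint a) (he : IsSpectralResolution τ a e)
    {R : ℝ} (hR : ‖a‖ < R) (n : ℕ) :
    φ (a ^ n) = R ^ n * φ 1 - ∫ s in (-R)..R, n * s ^ (n - 1) * φ (e s) := by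
  have hR0 : 0 < R := (norm_nonneg a).trans_lt hR
  obtain ⟨C, hC⟩ := he.exists_abs_apply_pow_mul_sub_le htr hpos ha R n
  have hmono := he.apply_mono hpos
  have hcont : Continuous fun s : ℝ ↦ (n : ℝ) * s ^ (n - 1) := by fun_prop
  have hint (x y : ℝ) :
      IntervalIntegrable (fun s ↦ (n : ℝ) * s ^ (n - 1) * φ (e s)) volume x y :=
    hmono.intervalIntegrable.continuousOn_mul hcont.continuousOn
  let K : ℝ → ℝ := fun s ↦ φ (a ^ n * e s) - s ^ n * φ (e s) +
    ∫ r in (-R)..s, n * r ^ (n - 1) * φ (e r)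
  have hK : K R = K (-R) := by
    refine eq_of_abs_sub_le_mul_sub (F := fun s ↦ φ (e s)) (C := C + n * R ^ (n - 1))
      (by linarith) fun s u hs hsu hu ↦ ?_
    have h1 := hC s u (abs_le.2 ⟨hs, hsu.trans hu⟩) hsu
    have h2 : K u - K s = (φ (a ^ n * (e u - e s)) - s ^ n * φ (e u - e s)) +
        ∫ r in s..u, n * r ^ (n - 1) * (φ (e r) - φ (e u)) := by
      have h3 : ∫ r in s..u, n * r ^ (n - 1) * (φ (e r) - φ (e u)) =
          (∫ r in s..u, n * r ^ (n - 1) * φ (e r)) - (u ^ n - s ^ n) * φ (e u) := by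
        simp_rw [mul_sub]
        rw [intervalIntegral.integral_sub (hint s u)
          ((hcont.intervalIntegrable s u).mul_const _),
          intervalIntegral.integral_mul_const,
          intervalIntegral.integral_eq_sub_of_hasDerivAt (fun x _ ↦ hasDerivAt_pow n x)
            (hcont.intervalIntegrable s u)]
      have h4 := intervalIntegral.integral_add_adjacent_intervals (hint (-R) s) (hint s u)
      simp only [K]
      rw [h3, ← h4, mul_sub, map_sub, map_sub]
      ring
    have h5 : |∫ r in s..u, n * r ^ (n - 1) * (φ (e r) - φ (e u))| ≤
        n * R ^ (n - 1) * (φ (e u) - φ (e s)) * (u - s) := by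
      rw [← abs_of_nonneg (sub_nonneg.2 hsu), ← Real.norm_eq_abs]
      refine intervalIntegral.norm_integral_le_of_norm_le_const fun r hr ↦ ?_
      rw [uIoc_of_le hsu] at hr
      have h6 : φ (e r) ≤ φ (e u) := hmono hr.2
      have h7 : φ (e s) ≤ φ (e r) := hmono hr.1.le
      have h8 : |r| ≤ R := abs_le.2 ⟨by linarith [hr.1], by linarith [hr.2]⟩
      rw [Real.norm_eq_abs, abs_mul, abs_mul, abs_pow, Nat.abs_cast, abs_sub_comm,
        abs_of_nonneg (sub_nonneg.2 h6)]
      gcongr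
    rw [h2]
    refine (abs_add_le _ _).trans ?_
    rw [map_sub] at h1 ⊢
    linarith
  have htop := he.top R hR.le
  have hbot := he.bot (-R) (neg_lt_neg hR)
  simp only [K, htop, hbot, mul_one, mul_zero, map_zero, intervalIntegral.integral_same] at hK
  linarith

lemma apply_aeval_eq (htr : ∀ x y : A, φ (x * y) = φ (y * x))
    (hpos : ∀ x : A, 0 ≤ x → 0 ≤ φ x) (ha : IsSelfAdjoint a) (he : IsSpectralResolution τ a e)
    {R : ℝ} (hR : ‖a‖ < R) (G : ℝ[X]) :
    φ (aeval a G) = G.eval R * φ 1 - ∫ s in (-R)..R, (derivative G).eval s * φ (e s) := by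
  have hint (p : ℝ[X]) : IntervalIntegrable (fun s ↦ p.eval s * φ (e s)) volume (-R) R :=
    (he.apply_mono hpos).intervalIntegrable.continuousOn_mul p.continuous.continuousOn
  induction G using Polynomial.induction_on' with
  | add p q hp hq =>
    have : ∀ s, (derivative (p + q)).eval s * φ (e s) =
        (derivative p).eval s * φ (e s) + (derivative q).eval s * φ (e s) := fun s ↦ by
      rw [derivative_add, eval_add, add_mul]
    simp_rw [this]
    rw [intervalIntegral.integral_add (hint _) (hint _), map_add, map_add, hp, hq, eval_add]
    ring
  | monomial n c =>
    have : ∀ s, (derivative (monomial n c)).eval s * φ (e s) =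
        c * (n * s ^ (n - 1) * φ (e s)) := fun s ↦ by
      rw [derivative_monomial, eval_monomial]
      ring
    simp_rw [this]
    rw [intervalIntegral.integral_const_mul, aeval_monomial, ← Algebra.smul_def, map_smul,
      smul_eq_mul, he.apply_pow_eq htr hpos ha hR, eval_monomial]
    ring

end IsSpectralResolution

lemma Polynomial.exists_derivative_eq (g : ℝ[X]) : ∃ G : ℝ[X], derivative G = g := by
  induction g using Polynomial.induction_on' with
  | add p q hp hq =>
    obtain ⟨P, rfl⟩ := hp
    obtain ⟨Q, rfl⟩ := hq
    exact ⟨P + Q, derivative_add⟩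
  | monomial n c =>
    refine ⟨monomial (n + 1) (c / (n + 1)), ?_⟩
    rw [derivative_monomial]
    congr 1
    push_cast
    field_simp

lemma integral_abs_le_of_forall_polynomial {h : ℝ → ℝ} {R N : ℝ} (hR : 0 ≤ R)
    (hint : IntervalIntegrable h volume (-R) R) (h1 : ∀ s, |h s| ≤ 1)
    (H : ∀ (g : ℝ[X]) (M : ℝ), (∀ s ∈ Icc (-R) R, |g.eval s| ≤ M) →
      ∫ s in (-R)..R, g.eval s * h s ≤ M * N) :
    ∫ s in (-R)..R, |h s| ≤ N := by
  have hRR : -R ≤ R := by linarith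
  have bound (ε : ℝ) (hε : 0 < ε) :
      ∫ s in (-R)..R, |h s| ≤ N + ε * (N + 2 + 4 * R) := by
    have hint' := (intervalIntegrable_iff_integrableOn_Ioc_of_le hRR).1 hint
    obtain ⟨k, -, hk, hkc, hki⟩ := hint'.exists_hasCompactSupport_integral_sub_le hε
    have hpos (x : ℝ) : 0 < |k x| + ε := by positivity
    have hfc : Continuous fun x ↦ k x / (|k x| + ε) :=
      hkc.div (by fun_prop) fun x ↦ (hpos x).ne'
    obtain ⟨g, hg⟩ := exists_polynomial_near_of_continuousOn (-R) R _ hfc.continuousOn ε hε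
    have hf1 (x : ℝ) : |k x / (|k x| + ε)| ≤ 1 := by
      rw [abs_div, abs_of_pos (hpos x)]
      exact div_le_one_of_le₀ (by linarith) (hpos x).le
    have hfk (x : ℝ) : |k x| - ε ≤ k x / (|k x| + ε) * k x := by
      rw [div_mul_eq_mul_div, le_div_iff₀ (hpos x), ← abs_mul_abs_self (k x)]
      nlinarith
    have hgM : ∀ s ∈ Icc (-R) R, |g.eval s| ≤ 1 + ε := fun s hs ↦ by
      have := abs_add_le (g.eval s - k s / (|k s| + ε)) (k s / (|k s| + ε))
      rw [sub_add_cancel] at this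
      linarith [hg s hs, hf1 s]
    have hpt : ∀ s ∈ Icc (-R) R,
        |h s| ≤ g.eval s * h s + (2 * ‖h s - k s‖ + 2 * ε) := fun s hs ↦ by
      set f := k s / (|k s| + ε) with hf
      have e1 : |(g.eval s - f) * h s| ≤ ε * 1 := by
        rw [abs_mul]
        exact mul_le_mul (hg s hs).le (h1 s) (abs_nonneg _) hε.le
      have e2 : |f * (h s - k s)| ≤ 1 * |h s - k s| := by
        rw [abs_mul]
        exact mul_le_mul_of_nonneg_right (hf1 s) (abs_nonneg _)
      have e3 := hfk s
      have e4 := abs_add_le (h s - k s) (k s)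
      rw [sub_add_cancel] at e4
      have e5 : g.eval s * h s = (g.eval s - f) * h s + f * (h s - k s) + f * k s := by ring
      rw [e5, Real.norm_eq_abs]
      linarith [(abs_le.1 e1).1, (abs_le.1 e2).1]
    have hki' : IntervalIntegrable k volume (-R) R := hkc.intervalIntegrable _ _
    have hgh : IntervalIntegrable (fun s ↦ g.eval s * h s) volume (-R) R :=
      hint.continuousOn_mul g.continuous.continuousOn
    have hδ : IntervalIntegrable (fun s ↦ 2 * ‖h s - k s‖) volume (-R) R :=
      (hint.sub hki').norm.const_mul 2
    have hle := intervalIntegral.integral_mono_on hRR hint.abs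
      (hgh.add (hδ.add intervalIntegrable_const)) hpt
    have hconst : IntervalIntegrable (fun _ : ℝ ↦ 2 * ε) volume (-R) R :=
      intervalIntegrable_const
    rw [intervalIntegral.integral_add hgh (hδ.add hconst),
      intervalIntegral.integral_add hδ hconst, intervalIntegral.integral_const_mul,
      intervalIntegral.integral_const, smul_eq_mul,
      intervalIntegral.integral_of_le (f := fun s ↦ ‖h s - k s‖) hRR] at hle
    linarith [H g _ hgM]
  have hlim : Filter.Tendsto (fun ε : ℝ ↦ N + ε * (N + 2 + 4 * R)) (nhdsWithin 0 (Ioi 0))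
      (nhds N) := by
    have : Continuous fun ε : ℝ ↦ N + ε * (N + 2 + 4 * R) := by fun_prop
    simpa using (this.tendsto 0).mono_left nhdsWithin_le_nhds
  exact ge_of_tendsto hlim (by filter_upwards [self_mem_nhdsWithin] with ε hε using bound ε hε)

lemma integral_abs_sub_quantile_le {f g P Q : ℝ → ℝ} {R : ℝ} (hR : 0 ≤ R) (hP : Monotone P)
    (hQ : Monotone Q) (hf : ∀ t ∈ Ioo (0 : ℝ) 1, ∀ s, f t ≤ s ↔ 1 - P s ≤ t)
    (hg : ∀ t ∈ Ioo (0 : ℝ) 1, ∀ s, g t ≤ s ↔ 1 - Q s ≤ t)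
    (hfR : ∀ t ∈ Ioo (0 : ℝ) 1, f t ∈ Icc (-R) R) (hgR : ∀ t ∈ Ioo (0 : ℝ) 1, g t ∈ Icc (-R) R) :
    ∫ t in (0 : ℝ)..1, |f t - g t| ≤ ∫ s in (-R)..R, |P s - Q s| := by
  have hRR : -R ≤ R := by linarith
  have hPQ := (hP.intervalIntegrable (μ := volume) (a := -R) (b := R)).sub
    hQ.intervalIntegrable |>.abs
  rw [intervalIntegral.integral_of_le zero_le_one, integral_Ioc_eq_integral_Ioo,
    intervalIntegral.integral_of_le hRR, ← integral_Icc_eq_integral_Ioc]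
  by_cases hfg : IntegrableOn (fun t ↦ |f t - g t|) (Ioo 0 1)
  swap
  · rw [integral_undef hfg]
    exact integral_nonneg fun _ ↦ abs_nonneg _
  rw [intervalIntegrable_iff_integrableOn_Icc_of_le hRR] at hPQ
  rw [← ENNReal.ofReal_le_ofReal_iff (integral_nonneg fun _ ↦ abs_nonneg _),
    ofReal_integral_eq_lintegral_ofReal hfg (.of_forall fun _ ↦ abs_nonneg _),
    ofReal_integral_eq_lintegral_ofReal hPQ (.of_forall fun _ ↦ abs_nonneg _)]
  let S : Set (ℝ × ℝ) := {p | ¬(1 - P p.2 ≤ p.1 ↔ 1 - Q p.2 ≤ p.1)}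
  have hS : MeasurableSet S := by
    have hmeas {P : ℝ → ℝ} (hP : Monotone P) : MeasurableSet {p : ℝ × ℝ | 1 - P p.2 ≤ p.1} :=
      measurableSet_le ((hP.measurable.comp measurable_snd).const_sub 1) measurable_fst
    exact ((hmeas hP).iff (hmeas hQ)).compl
  calc ∫⁻ t in Ioo 0 1, ENNReal.ofReal |f t - g t|
      ≤ ∫⁻ t in Ioo 0 1, volume.restrict (Icc (-R) R) (Prod.mk t ⁻¹' S) := by
        refine setLIntegral_mono' measurableSet_Ioo fun t ht ↦ ?_
        rw [Measure.restrict_apply (measurable_prodMk_left hS), ← max_sub_min_eq_abs',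
          ← Real.volume_Ico]
        refine measure_mono fun s hs ↦ ⟨?_, ?_⟩
        · simp only [S, mem_preimage, mem_ofPred_eq, ← hf t ht, ← hg t ht]
          have h1 := min_le_iff.1 hs.1
          have h2 := lt_max_iff.1 hs.2
          grind
        · exact ⟨(le_min (hfR t ht).1 (hgR t ht).1).trans hs.1,
            hs.2.le.trans (max_le (hfR t ht).2 (hgR t ht).2)⟩
    _ = ∫⁻ s in Icc (-R) R, volume.restrict (Ioo 0 1) ((fun t ↦ (t, s)) ⁻¹' S) := by
        rw [← Measure.prod_apply hS, Measure.prod_apply_symm hS]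
    _ ≤ ∫⁻ s in Icc (-R) R, ENNReal.ofReal |P s - Q s| := by
        refine lintegral_mono fun s ↦ (Measure.restrict_apply_le _ _).trans ?_
        have : |P s - Q s| = |(1 - P s) - (1 - Q s)| := by
          rw [abs_sub_comm]
          congr 1
          ring
        rw [this, ← max_sub_min_eq_abs', ← Real.volume_Ico]
        refine measure_mono fun t ht ↦ ?_
        simp only [S, mem_preimage, mem_ofPred_eq] at ht
        rw [mem_Ico, min_le_iff, lt_max_iff]
        grind

namespace IsSpectralResolution

variable {τ : A →ₗ[ℂ] ℂ} {a : A} {e : ℝ → A}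

omit [StarOrderedRing A] in
lemma neg_norm_le_of_mem (he : IsSpectralResolution τ a e) {s t : ℝ} (ht : t < 1)
    (hs : 1 - (τ (e s)).re ≤ t) : -‖a‖ ≤ s := by
  by_contra! h
  rw [he.bot s h] at hs
  simp at hs
  linarith

omit [StarOrderedRing A] in
lemma norm_mem (hτ : IsFiniteTrace τ) (he : IsSpectralResolution τ a e) {t : ℝ} (ht : 0 < t) :
    1 - (τ (e ‖a‖)).re ≤ t := by
  rw [he.top _ le_rfl, hτ.normalized]
  simpa using ht.le

omit [StarOrderedRing A] in
lemma spectralScale_le_iff (hτ : IsFiniteTrace τ) (he : IsSpectralResolution τ a e)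
    (hmono : Monotone fun s ↦ (τ (e s)).re) {t : ℝ} (ht : t ∈ Ioo (0 : ℝ) 1) (s : ℝ) :
    spectralScale τ e t ≤ s ↔ 1 - (τ (e s)).re ≤ t := by
  refine ⟨fun h ↦ ?_, fun h ↦ csInf_le ⟨-‖a‖, fun u hu ↦ he.neg_norm_le_of_mem ht.2 hu⟩ h⟩
  have hne : {s : ℝ | 1 - (τ (e s)).re ≤ t}.Nonempty := ⟨‖a‖, he.norm_mem hτ ht.1⟩
  have hgt : ∀ u, s < u → 1 - (τ (e u)).re ≤ t := fun u hu ↦ by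
    obtain ⟨v, hv, hvu⟩ := exists_lt_of_csInf_lt hne (h.trans_lt hu)
    have : (τ (e v)).re ≤ (τ (e u)).re := hmono hvu.le
    have hv : 1 - (τ (e v)).re ≤ t := hv
    linarith
  have hlim : Filter.Tendsto (fun u ↦ 1 - (τ (e u)).re) (nhdsWithin s (Ioi s))
      (nhds (1 - (τ (e s)).re)) :=
    ((he.rightCont s).mono Ioi_subset_Ici_self).tendsto.const_sub 1
  exact le_of_tendsto hlim (by filter_upwards [self_mem_nhdsWithin] with u hu using hgt u hu)

omit [StarOrderedRing A] in
lemma spectralScale_mem_Icc (hτ : IsFiniteTrace τ) (he : IsSpectralResolution τ a e)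
    (hmono : Monotone fun s ↦ (τ (e s)).re) {t : ℝ} (ht : t ∈ Ioo (0 : ℝ) 1) :
    spectralScale τ e t ∈ Icc (-‖a‖) ‖a‖ :=
  ⟨le_csInf ⟨‖a‖, he.norm_mem hτ ht.1⟩ fun _ hu ↦ he.neg_norm_le_of_mem ht.2 hu,
    (he.spectralScale_le_iff hτ hmono ht _).2 (he.norm_mem hτ ht.1)⟩

end IsSpectralResolution

/-- The real part of a finite trace, as a continuous real-linear functional. -/
lemma IsFiniteTrace.exists_continuousLinearMap_re {τ : A →ₗ[ℂ] ℂ} (hτ : IsFiniteTrace τ) :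
    ∃ φ : A →L[ℝ] ℝ, ∀ x, φ x = (τ x).re := by
  have hcont : Continuous τ := by
    let T : A →ₚ[ℂ] ℂ := PositiveLinearMap.mk₀ τ hτ.pos
    exact map_continuous T
  exact ⟨Complex.reCLM.comp ((⟨τ, hcont⟩ : A →L[ℂ] ℂ).restrictScalars ℝ), fun _ ↦ rfl⟩

/-- Petz's estimate: spectral scales are Lipschitz with respect to the trace norm:
`‖λ_a − λ_b‖_{L¹[0,1]} ≤ ‖a − b‖₁`. -/
theorem spectralScale_L1_norm_estimate
    (τ : A →ₗ[ℂ] ℂ) (hτ : IsII1Trace τ) (a b : A)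
    (ha : IsSelfAdjoint a) (hb : IsSelfAdjoint b)
    (ea eb : ℝ → A) (hea : IsSpectralResolution τ a ea) (heb : IsSpectralResolution τ b eb) :
    ∫ t in (0:ℝ)..1, |spectralScale τ ea t - spectralScale τ eb t| ≤ traceNorm τ (a - b) := by
  have hτ' := hτ.toIsFiniteTrace
  obtain ⟨φ, hφ⟩ := hτ'.exists_continuousLinearMap_re
  have htr : ∀ x y : A, φ (x * y) = φ (y * x) := fun x y ↦ by
    rw [hφ, hφ, hτ'.tracial]
  have hpos : ∀ x : A, 0 ≤ x → 0 ≤ φ x := fun x hx ↦ by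
    rw [hφ]
    exact (Complex.nonneg_iff.1 (hτ'.pos x hx)).1
  have hφ1 : φ 1 = 1 := by rw [hφ, hτ'.normalized, Complex.one_re]
  have hma := hea.apply_mono hpos
  have hmb := heb.apply_mono hpos
  have hma' : Monotone fun s ↦ (τ (ea s)).re := by simpa only [hφ] using hma
  have hmb' : Monotone fun s ↦ (τ (eb s)).re := by simpa only [hφ] using hmb
  obtain ⟨R, haR, hbR⟩ : ∃ R, ‖a‖ < R ∧ ‖b‖ < R :=
    ⟨max ‖a‖ ‖b‖ + 1, by linarith [le_max_left ‖a‖ ‖b‖], by linarith [le_max_right ‖a‖ ‖b‖]⟩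
  have hR : 0 ≤ R := (norm_nonneg a).trans haR.le
  refine (integral_abs_sub_quantile_le hR hma' hmb'
    (fun t ht s ↦ hea.spectralScale_le_iff hτ' hma' ht s)
    (fun t ht s ↦ heb.spectralScale_le_iff hτ' hmb' ht s)
    (fun t ht ↦ Icc_subset_Icc (neg_le_neg haR.le) haR.le
      (hea.spectralScale_mem_Icc hτ' hma' ht))
    (fun t ht ↦ Icc_subset_Icc (neg_le_neg hbR.le) hbR.le
      (heb.spectralScale_mem_Icc hτ' hmb' ht))).trans ?_
  simp_rw [traceNorm, ← hφ, abs_sub_comm (φ (ea _))]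
  have hproj {p : A} (h1 : IsSelfAdjoint p) (h2 : p * p = p) : φ p ∈ Icc 0 1 := by
    have hp : IsStarProjection p := ⟨h2, h1⟩
    have := hpos _ hp.one_sub_nonneg
    rw [map_sub, hφ1] at this
    exact ⟨hpos _ hp.nonneg, by linarith⟩
  refine integral_abs_le_of_forall_polynomial hR
    (hmb.intervalIntegrable.sub hma.intervalIntegrable) (fun s ↦ ?_) fun g M hg ↦ ?_
  · have h1 := hproj (hea.selfAdjoint s) (hea.idem s)
    have h2 := hproj (heb.selfAdjoint s) (heb.idem s)
    exact abs_le.2 ⟨by linarith [h1.2, h2.1], by linarith [h1.1, h2.2]⟩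
  · obtain ⟨G, rfl⟩ := g.exists_derivative_eq
    refine le_of_eq_of_le ?_ (apply_aeval_sub_le htr hpos ha hb haR.le hbR.le G hg)
    rw [hea.apply_aeval_eq htr hpos ha haR, heb.apply_aeval_eq htr hpos hb hbR,
      sub_sub_sub_cancel_left, ← intervalIntegral.integral_sub]
    · simp_rw [mul_sub]
    · exact hmb.intervalIntegrable.continuousOn_mul (derivative G).continuous.continuousOn
    · exact hma.intervalIntegrable.continuousOn_mul (derivative G).continuous.continuousOn
end

section
/- Let M be a II₁ factor with trace τ and let a, b ∈ M be self-adjoint. Then a ≺ b (spectral majorization) if and only if τ(f(a)) ≤ τ(f(b)) for every convex function f : J → ℝ, where J is an open interval containing σ(a) ∪ σ(b). -/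
open scoped ComplexOrder

/- We model a II₁ factor abstractly: a unital C*-algebra `A` (with its canonical order)
together with a normalized faithful tracial state `τ` which has trivial center and
projections of every trace in `[0,1]`.  (Normality of `τ` and of the subalgebras is
implicit in the properties we record, e.g. right-continuity of spectral distributions.)
On bounded sets the σ-strong operator topology of a II₁ factor coincides with the
topology of the trace norm `‖x‖₁ = τ(|x|)`; accordingly σ-strong closures of bounded
sets are formalized as `‖·‖₁`-closures. -/

variable {A : Type*} [CStarAlgebra A] [PartialOrder A] [StarOrderedRing A]

/-- `F` is a right-continuous distribution function carried by `[-R, R]`. -/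
structure IsBoundedDistribution (F : ℝ → ℝ) (R : ℝ) : Prop where
  mono : Monotone F
  bot : ∀ s, s < -R → F s = 0
  top : ∀ s, R ≤ s → F s = 1
  rightCont : ∀ s, ContinuousWithinAt F (Set.Ici s) s

/-- The decreasing quantile function of a distribution function. -/
noncomputable def decreasingQuantile (F : ℝ → ℝ) (t : ℝ) : ℝ :=
  sInf {s : ℝ | 1 - F s ≤ t}

namespace IsBoundedDistribution

variable {F : ℝ → ℝ} {R : ℝ}

theorem mem_Icc (hF : IsBoundedDistribution F R) (s : ℝ) : F s ∈ Set.Icc (0 : ℝ) 1 := by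
  constructor
  · rw [← hF.bot (min s (-R - 1)) (by linarith [min_le_right s (-R - 1)])]
    exact hF.mono (min_le_left _ _)
  · rw [← hF.top (max s R) (le_max_right _ _)]
    exact hF.mono (le_max_left _ _)

theorem decreasingQuantile_le_iff (hF : IsBoundedDistribution F R) {t : ℝ}
    (ht : t ∈ Set.Ico (0 : ℝ) 1) (r : ℝ) : decreasingQuantile F t ≤ r ↔ 1 - F r ≤ t := by
  have hbdd : BddBelow {s : ℝ | 1 - F s ≤ t} := by
    refine ⟨-R, fun s hs => ?_⟩
    by_contra! h
    have hs' : 1 - F s ≤ t := hs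
    rw [hF.bot s h] at hs'
    linarith [ht.2]
  have hne : {s : ℝ | 1 - F s ≤ t}.Nonempty :=
    ⟨R, show 1 - F R ≤ t by rw [hF.top R le_rfl]; linarith [ht.1]⟩
  refine ⟨fun h => ?_, fun h => csInf_le hbdd h⟩
  have hgt : ∀ u, r < u → 1 - F u ≤ t := by
    intro u hu
    obtain ⟨s, hs, hsu⟩ := exists_lt_of_csInf_lt hne (lt_of_le_of_lt h hu)
    have hs' : 1 - F s ≤ t := hs
    linarith [hF.mono hsu.le]
  have hlim : Filter.Tendsto (fun u => 1 - F u) (nhdsWithin r (Set.Ioi r)) (nhds (1 - F r)) :=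
    (((hF.rightCont r).mono Set.Ioi_subset_Ici_self).tendsto).const_sub 1
  exact le_of_tendsto hlim (Filter.eventually_of_mem self_mem_nhdsWithin hgt)

theorem antitoneOn_decreasingQuantile (hF : IsBoundedDistribution F R) :
    AntitoneOn (decreasingQuantile F) (Set.Ico 0 1) := by
  intro t ht t' ht' htt'
  exact (hF.decreasingQuantile_le_iff ht' _).2
    (((hF.decreasingQuantile_le_iff ht _).1 le_rfl).trans htt')

theorem decreasingQuantile_le (hF : IsBoundedDistribution F R) {t : ℝ}
    (ht : t ∈ Set.Ico (0 : ℝ) 1) : decreasingQuantile F t ≤ R :=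
  (hF.decreasingQuantile_le_iff ht R).2 (by rw [hF.top R le_rfl]; linarith [ht.1])

theorem neg_le_decreasingQuantile (hF : IsBoundedDistribution F R) {t : ℝ}
    (ht : t ∈ Set.Ico (0 : ℝ) 1) : -R ≤ decreasingQuantile F t := by
  by_contra! h
  have h' := (hF.decreasingQuantile_le_iff ht _).1 le_rfl
  rw [hF.bot _ h] at h'
  linarith [ht.2]

theorem intervalIntegrable_decreasingQuantile (hF : IsBoundedDistribution F R) {u v : ℝ}
    (hu : u ∈ Set.Icc (0 : ℝ) 1) (hv : v ∈ Set.Icc (0 : ℝ) 1) :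
    IntervalIntegrable (decreasingQuantile F) MeasureTheory.volume u v := by
  have h01 : IntervalIntegrable (decreasingQuantile F) MeasureTheory.volume 0 1 := by
    rw [intervalIntegrable_iff_integrableOn_Ico_of_le zero_le_one]
    refine MeasureTheory.IntegrableOn.of_bound (by simp)
      (aemeasurable_restrict_of_antitoneOn measurableSet_Ico
        hF.antitoneOn_decreasingQuantile).aestronglyMeasurable R ?_
    filter_upwards [MeasureTheory.ae_restrict_mem measurableSet_Ico] with t ht
    exact abs_le.2 ⟨hF.neg_le_decreasingQuantile ht, hF.decreasingQuantile_le ht⟩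
  refine h01.mono_set ?_
  rw [Set.uIcc_of_le zero_le_one]
  exact Set.uIcc_subset_Icc hu hv

theorem intervalIntegrable_hinge (hF : IsBoundedDistribution F R) (r : ℝ) {u v : ℝ}
    (hu : u ∈ Set.Icc (0 : ℝ) 1) (hv : v ∈ Set.Icc (0 : ℝ) 1) :
    IntervalIntegrable (fun t => max (decreasingQuantile F t - r) 0)
      MeasureTheory.volume u v := by
  have h := (hF.intervalIntegrable_decreasingQuantile hu hv).sub
    (intervalIntegrable_const (c := r))
  exact ⟨h.1.pos_part, h.2.pos_part⟩

theorem integral_sub_const (hF : IsBoundedDistribution F R) (r : ℝ) {s : ℝ}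
    (hs : s ∈ Set.Icc (0 : ℝ) 1) :
    ∫ t in (0 : ℝ)..s, (decreasingQuantile F t - r) =
      (∫ t in (0 : ℝ)..s, decreasingQuantile F t) - r * s := by
  rw [intervalIntegral.integral_sub
    (hF.intervalIntegrable_decreasingQuantile (by simp) hs) intervalIntegrable_const]
  simp [mul_comm]

theorem integral_sub_le_integral_hinge (hF : IsBoundedDistribution F R) (r : ℝ) {s : ℝ}
    (hs : s ∈ Set.Icc (0 : ℝ) 1) :
    (∫ t in (0 : ℝ)..s, decreasingQuantile F t) - r * s ≤
      ∫ t in (0 : ℝ)..1, max (decreasingQuantile F t - r) 0 := by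
  rw [← hF.integral_sub_const r hs]
  calc ∫ t in (0 : ℝ)..s, (decreasingQuantile F t - r)
      ≤ ∫ t in (0 : ℝ)..s, max (decreasingQuantile F t - r) 0 :=
        intervalIntegral.integral_mono_on hs.1
          ((hF.intervalIntegrable_decreasingQuantile (by simp) hs).sub intervalIntegrable_const)
          (hF.intervalIntegrable_hinge r (by simp) hs) fun t _ => le_max_left _ _
    _ ≤ ∫ t in (0 : ℝ)..1, max (decreasingQuantile F t - r) 0 :=
        intervalIntegral.integral_mono_interval le_rfl hs.1 hs.2
          (Filter.Eventually.of_forall fun t => le_max_right _ _)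
          (hF.intervalIntegrable_hinge r (by simp) (by simp))

theorem integral_hinge_le_integral_sub (hF : IsBoundedDistribution F R) {r s : ℝ}
    (hs : s ∈ Set.Icc (0 : ℝ) 1)
    (hlow : ∀ t ∈ Set.Ioo 0 s, r ≤ decreasingQuantile F t)
    (hhigh : ∀ t ∈ Set.Ioo s 1, decreasingQuantile F t ≤ r) :
    ∫ t in (0 : ℝ)..1, max (decreasingQuantile F t - r) 0 ≤
      (∫ t in (0 : ℝ)..s, decreasingQuantile F t) - r * s := by
  have h0 : (0 : ℝ) ∈ Set.Icc (0 : ℝ) 1 := by simp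
  have h1 : (1 : ℝ) ∈ Set.Icc (0 : ℝ) 1 := by simp
  rw [← hF.integral_sub_const r hs, ← intervalIntegral.integral_add_adjacent_intervals
    (hF.intervalIntegrable_hinge r h0 hs) (hF.intervalIntegrable_hinge r hs h1)]
  have hfst : ∫ t in (0 : ℝ)..s, max (decreasingQuantile F t - r) 0 ≤
      ∫ t in (0 : ℝ)..s, (decreasingQuantile F t - r) :=
    intervalIntegral.integral_mono_on_of_le_Ioo hs.1 (hF.intervalIntegrable_hinge r h0 hs)
      ((hF.intervalIntegrable_decreasingQuantile h0 hs).sub intervalIntegrable_const)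
      fun t ht => max_le le_rfl (sub_nonneg.2 (hlow t ht))
  have hsnd : ∫ t in s..1, max (decreasingQuantile F t - r) 0 ≤ ∫ t in s..1, (0 : ℝ) :=
    intervalIntegral.integral_mono_on_of_le_Ioo hs.2 (hF.intervalIntegrable_hinge r hs h1)
      intervalIntegrable_const fun t ht => max_le (sub_nonpos.2 (hhigh t ht)) le_rfl
  simp only [intervalIntegral.integral_zero] at hsnd
  linarith

theorem one_sub_mem_Icc (hF : IsBoundedDistribution F R) (r : ℝ) :
    1 - F r ∈ Set.Icc (0 : ℝ) 1 :=
  ⟨by linarith [(hF.mem_Icc r).2], by linarith [(hF.mem_Icc r).1]⟩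

theorem integral_hinge_eq (hF : IsBoundedDistribution F R) (r : ℝ) :
    ∫ t in (0 : ℝ)..1, max (decreasingQuantile F t - r) 0 =
      (∫ t in (0 : ℝ)..(1 - F r), decreasingQuantile F t) - r * (1 - F r) := by
  have hs := hF.one_sub_mem_Icc r
  refine le_antisymm (hF.integral_hinge_le_integral_sub hs (fun t ht => ?_) fun t ht => ?_)
    (hF.integral_sub_le_integral_hinge r hs)
  · by_contra! h
    have := (hF.decreasingQuantile_le_iff ⟨ht.1.le, ht.2.trans_le hs.2⟩ r).1 h.le
    linarith [ht.2]
  · exact (hF.decreasingQuantile_le_iff ⟨hs.1.trans ht.1.le, ht.2⟩ r).2 ht.1.le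

/-- A function whose increments are controlled by those of a distribution function as
`(r - r') (F r - F r')` is constant. -/
theorem const_of_sub_le (hF : IsBoundedDistribution F R) {D : ℝ → ℝ}
    (hD : ∀ r r', D r' - D r ≤ (r' - r) * (F r' - F r)) (r r' : ℝ) : D r = D r' := by
  have habs : ∀ r r', |D r' - D r| ≤ |r' - r| * |F r' - F r| := by
    intro r r'
    rw [← abs_mul]
    refine abs_le.2 ⟨?_, (hD r r').trans (le_abs_self _)⟩
    have h := hD r' r
    have h2 := le_abs_self ((r' - r) * (F r' - F r))
    nlinarith
  have hcont : Continuous D := by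
    refine (LipschitzWith.of_dist_le_mul (K := 1) fun x y => ?_).continuous
    rw [Real.dist_eq, Real.dist_eq, NNReal.coe_one, one_mul]
    refine (habs y x).trans (mul_le_of_le_one_right (abs_nonneg _) ?_)
    have hx := hF.mem_Icc x
    have hy := hF.mem_Icc y
    exact abs_le.2 ⟨by linarith [hx.1, hy.2], by linarith [hx.2, hy.1]⟩
  have hderiv : ∀ x, HasDerivWithinAt D 0 (Set.Ici x) x := by
    intro x
    rw [hasDerivWithinAt_iff_isLittleO]
    simp only [smul_zero, sub_zero]
    refine Asymptotics.isLittleO_iff.2 fun ε hε => ?_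
    have hlim := (Metric.tendsto_nhds.1 (hF.rightCont x).tendsto) ε hε
    filter_upwards [hlim] with y hy
    rw [Real.dist_eq] at hy
    rw [Real.norm_eq_abs, Real.norm_eq_abs, mul_comm]
    exact (habs x y).trans (mul_le_mul_of_nonneg_left hy.le (abs_nonneg _))
  have hle : ∀ a b, a ≤ b → D b = D a := fun a b hab =>
    constant_of_has_deriv_right_zero hcont.continuousOn (fun x _ => hderiv x) b ⟨hab, le_rfl⟩
  rcases le_total r r' with h | h
  · exact (hle _ _ h).symm
  · exact hle _ _ h

/-- A function vanishing at the right end of the support whose subgradients are given by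
`F - 1` is the integrated hinge function of the quantiles. -/
theorem eq_integral_hinge (hF : IsBoundedDistribution F R) {φ : ℝ → ℝ} (hR : φ R = 0)
    (hφ : ∀ r r', (r' - r) * (1 - F r') ≤ φ r - φ r') (r : ℝ) :
    φ r = ∫ t in (0 : ℝ)..1, max (decreasingQuantile F t - r) 0 := by
  set W : ℝ → ℝ := fun r => ∫ t in (0 : ℝ)..1, max (decreasingQuantile F t - r) 0 with hW
  have hWsub : ∀ r r', (r' - r) * (1 - F r') ≤ W r - W r' := by
    intro r r'
    have h := hF.integral_sub_le_integral_hinge r (hF.one_sub_mem_Icc r')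
    have h' := hF.integral_hinge_eq r'
    simp only [hW]
    linarith
  have hWR : W R = 0 := by
    simp only [hW, hF.integral_hinge_eq R, hF.top R le_rfl]
    simp
  have hconst := hF.const_of_sub_le (D := fun r => φ r - W r) (fun r r' => by
    have h1 := hφ r r'
    have h2 := hWsub r' r
    linarith) r R
  simp only [hR, hWR, sub_zero] at hconst
  linarith

/-- Weak majorization of quantiles is the same as domination of all integrated hinges. -/
theorem forall_integral_le_iff {G : ℝ → ℝ} {S : ℝ} (hF : IsBoundedDistribution F R)
    (hG : IsBoundedDistribution G S) :
    (∀ s ∈ Set.Ico (0 : ℝ) 1, ∫ t in (0 : ℝ)..s, decreasingQuantile F t ≤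
        ∫ t in (0 : ℝ)..s, decreasingQuantile G t) ↔
      ∀ r, ∫ t in (0 : ℝ)..1, max (decreasingQuantile F t - r) 0 ≤
        ∫ t in (0 : ℝ)..1, max (decreasingQuantile G t - r) 0 := by
  constructor
  · intro h
    have hcont : ∀ {H : ℝ → ℝ} {T : ℝ}, IsBoundedDistribution H T →
        ContinuousOn (fun s => ∫ t in (0 : ℝ)..s, decreasingQuantile H t) (Set.Icc 0 1) := by
      intro H T hH
      have hint := hH.intervalIntegrable_decreasingQuantile (u := 0) (v := 1) (by simp) (by simp)
      rw [intervalIntegrable_iff_integrableOn_Icc_of_le zero_le_one,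
        ← Set.uIcc_of_le (zero_le_one' ℝ)] at hint
      have := intervalIntegral.continuousOn_primitive_interval hint
      rwa [Set.uIcc_of_le (zero_le_one' ℝ)] at this
    have hIcc : ∀ s ∈ Set.Icc (0 : ℝ) 1, ∫ t in (0 : ℝ)..s, decreasingQuantile F t ≤
        ∫ t in (0 : ℝ)..s, decreasingQuantile G t := by
      have hcl : closure (Set.Ico (0 : ℝ) 1) = Set.Icc 0 1 := closure_Ico zero_ne_one
      intro s hs
      rw [← hcl] at hs
      exact ContinuousWithinAt.closure_le (f := fun s => ∫ t in (0 : ℝ)..s, decreasingQuantile F t)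
        (g := fun s => ∫ t in (0 : ℝ)..s, decreasingQuantile G t) hs
        (((hcont hF) s (hcl ▸ hs)).mono Set.Ico_subset_Icc_self)
        (((hcont hG) s (hcl ▸ hs)).mono Set.Ico_subset_Icc_self) h
    intro r
    have hs := hF.one_sub_mem_Icc r
    rw [hF.integral_hinge_eq r]
    linarith [hIcc _ hs, hG.integral_sub_le_integral_hinge r hs]
  · intro h s hs
    have hs' := Set.Ico_subset_Icc_self hs
    have h1 := hF.integral_sub_le_integral_hinge (decreasingQuantile G s) hs'
    have h2 := hG.integral_hinge_le_integral_sub hs'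
      (fun t ht => hG.antitoneOn_decreasingQuantile ⟨ht.1.le, ht.2.trans hs.2⟩ hs ht.2.le)
      (fun t ht => hG.antitoneOn_decreasingQuantile hs ⟨hs.1.trans ht.1.le, ht.2⟩ ht.1.le)
    linarith [h (decreasingQuantile G s)]

end IsBoundedDistribution

/-- Convex functions on a compact interval are uniform limits of functions built from affine
functions by adding nonnegative multiples of hinges `x ↦ max (x - r) 0`. -/
theorem ConvexOn.exists_hinge_approx {m M : ℝ} (hmM : m < M) {f : ℝ → ℝ}
    (hf : ConvexOn ℝ (Set.Icc m M) f) (hfc : ContinuousOn f (Set.Icc m M))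
    {C : (ℝ → ℝ) → Prop} (hC_affine : ∀ p q : ℝ, C fun x => p + q * x)
    (hC_hinge : ∀ g, C g → ∀ k r : ℝ, 0 ≤ k → C fun x => g x + k * max (x - r) 0)
    {ε : ℝ} (hε : 0 < ε) : ∃ g, C g ∧ ∀ x ∈ Set.Icc m M, |g x - f x| ≤ ε := by
  obtain ⟨δ, hδ, hδf⟩ := Metric.uniformContinuousOn_iff.1
    (isCompact_Icc.uniformContinuousOn_of_continuous hfc) ε hε
  obtain ⟨N, hN⟩ := exists_nat_gt ((M - m) / δ)
  have hN0 : (0 : ℝ) < N := lt_of_le_of_lt (div_nonneg (sub_nonneg.2 hmM.le) hδ.le) hN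
  have hNpos : 0 < N := by exact_mod_cast hN0
  set h : ℝ := (M - m) / N with hh
  have hh0 : 0 < h := div_pos (sub_pos.2 hmM) hN0
  have hhδ : h < δ := by
    rw [hh, div_lt_iff₀ hN0]
    rwa [div_lt_iff₀ hδ, mul_comm] at hN
  have hNh : N * h = M - m := by rw [hh]; field_simp
  set y : ℕ → ℝ := fun k => m + k * h with hy
  have hysucc : ∀ k, y (k + 1) = y k + h := fun k => by simp only [hy]; push_cast; ring
  have hymem : ∀ k ≤ N, y k ∈ Set.Icc m M := by
    intro k hk
    have hkN : (k : ℝ) ≤ N := by exact_mod_cast hk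
    have := mul_le_mul_of_nonneg_right hkN hh0.le
    exact ⟨by simp only [hy]; nlinarith [mul_nonneg (Nat.cast_nonneg (α := ℝ) k) hh0.le],
      by simp only [hy]; linarith⟩
  set σ : ℕ → ℝ := fun k => (f (y (k + 1)) - f (y k)) / h with hσ
  have hσmul : ∀ k, σ k * h = f (y (k + 1)) - f (y k) := fun k => by
    simp only [hσ]; field_simp
  have hσmono : ∀ k, k + 2 ≤ N → σ k ≤ σ (k + 1) := by
    intro k hk
    have := hf.slope_mono_adjacent (hymem k (by omega)) (hymem (k + 2) hk)
      (y := y (k + 1)) (by rw [hysucc]; linarith) (by rw [hysucc (k + 1)]; linarith)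
    rwa [hysucc k, hysucc (k + 1), hysucc k, add_sub_cancel_left, add_sub_cancel_left,
      ← hysucc k, ← hysucc (k + 1)] at this
  have hchord : ∀ k, k + 1 ≤ N → ∀ x ∈ Set.Icc (y k) (y (k + 1)),
      |f (y k) + σ k * (x - y k) - f x| ≤ ε := by
    intro k hk x hx
    have hyk := hymem k (by omega)
    have hyk1 := hymem (k + 1) hk
    have hxm : x ∈ Set.Icc m M := ⟨hyk.1.trans hx.1, hx.2.trans hyk1.2⟩
    have hx2 : x ≤ y k + h := hysucc k ▸ hx.2
    have hd0 := hδf (y k) hyk x hxm (by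
      rw [Real.dist_eq, abs_lt]; constructor <;> linarith [hx.1])
    have hd1 := hδf (y (k + 1)) hyk1 x hxm (by
      rw [Real.dist_eq, abs_lt, hysucc]; constructor <;> linarith [hx.1])
    rw [Real.dist_eq, abs_lt] at hd0 hd1
    set θ : ℝ := (x - y k) / h with hθ
    have hθ0 : 0 ≤ θ := div_nonneg (sub_nonneg.2 hx.1) hh0.le
    have hθ1 : θ ≤ 1 := (div_le_one hh0).2 (by linarith)
    have heq : f (y k) + σ k * (x - y k) - f x =
        (1 - θ) * (f (y k) - f x) + θ * (f (y (k + 1)) - f x) := by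
      have : x - y k = θ * h := by rw [hθ]; field_simp
      rw [this]
      linear_combination θ * hσmul k
    rw [heq, abs_le]
    constructor <;> nlinarith [hd0.1, hd0.2, hd1.1, hd1.2]
  have key : ∀ k, k + 1 ≤ N → ∃ g, C g ∧ (∀ x, y k ≤ x → g x = f (y k) + σ k * (x - y k)) ∧
      ∀ x ∈ Set.Icc m (y (k + 1)), |g x - f x| ≤ ε := by
    intro k
    induction k with
    | zero =>
      intro hk
      refine ⟨fun x => (f (y 0) - σ 0 * y 0) + σ 0 * x, hC_affine _ _, fun x _ => by ring, ?_⟩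
      intro x hx
      have := hchord 0 hk x (by simpa [hy] using hx)
      convert this using 2
      ring
    | succ k ih =>
      intro hk
      obtain ⟨g, hgC, hglin, hgapp⟩ := ih (by omega)
      have hlin : ∀ x, y (k + 1) ≤ x → g x + (σ (k + 1) - σ k) * max (x - y (k + 1)) 0 =
          f (y (k + 1)) + σ (k + 1) * (x - y (k + 1)) := by
        intro x hx
        rw [max_eq_left (sub_nonneg.2 hx), hglin x (by rw [hysucc] at hx; linarith), hysucc]
        have := hσmul k
        rw [hysucc] at this
        linear_combination this
      refine ⟨fun x => g x + (σ (k + 1) - σ k) * max (x - y (k + 1)) 0,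
        hC_hinge g hgC _ _ (sub_nonneg.2 (hσmono k (by omega))), hlin, fun x hx => ?_⟩
      rcases le_total x (y (k + 1)) with hxk | hxk
      · simpa [max_eq_right (sub_nonpos.2 hxk)] using hgapp x ⟨hx.1, hxk⟩
      · dsimp only
        rw [hlin x hxk]
        exact hchord (k + 1) hk x ⟨hxk, hx.2⟩
  obtain ⟨g, hgC, -, hg⟩ := key (N - 1) (by omega)
  refine ⟨g, hgC, fun x hx => hg x ?_⟩
  rw [Nat.sub_add_cancel hNpos]
  have : y N = M := by simp only [hy]; linarith
  rwa [this]


theorem IsSelfAdjoint.sub_smul_one_eq_cfc {B : Type*} [CStarAlgebra B] {a : B}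
    (ha : IsSelfAdjoint a) (r : ℝ) : a - (r : ℂ) • 1 = cfc (fun x : ℝ => x - r) a := by
  rw [cfc_sub _ _ a, cfc_id' ℝ a, cfc_const r a, Algebra.algebraMap_eq_smul_one]
  simp

namespace IsFiniteTrace

variable {τ : A →ₗ[ℂ] ℂ}

theorem im_eq_zero (hτ : IsFiniteTrace τ) {x : A} (hx : IsSelfAdjoint x) : (τ x).im = 0 := by
  have hpos := Complex.le_def.1 (hτ.pos _ (CFC.posPart_nonneg x))
  have hneg := Complex.le_def.1 (hτ.pos _ (CFC.negPart_nonneg x))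
  rw [← CFC.posPart_sub_negPart x hx, map_sub, Complex.sub_im, ← hpos.2, ← hneg.2, sub_self]

theorem re_mono (hτ : IsFiniteTrace τ) {x y : A} (h : x ≤ y) : (τ x).re ≤ (τ y).re := by
  have := (Complex.le_def.1 (hτ.pos _ (sub_nonneg.2 h))).1
  rw [map_sub, Complex.sub_re, Complex.zero_re] at this
  linarith

theorem re_mul_projection_nonneg (hτ : IsFiniteTrace τ) {x p : A} (hx : 0 ≤ x)
    (hp : IsSelfAdjoint p) (hpp : p * p = p) : 0 ≤ (τ (x * p)).re := by
  have h : τ (x * p) = τ (p * x * p) := by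
    rw [mul_assoc, hτ.tracial p, mul_assoc, hpp]
  rw [h]
  exact (Complex.le_def.1 (hτ.pos _ (hp.conjugate_nonneg hx))).1

theorem re_sub_mul_projection_le (hτ : IsFiniteTrace τ) {a p : A} (ha : IsSelfAdjoint a)
    (hp : IsSelfAdjoint p) (hpp : p * p = p) (r : ℝ) :
    (τ ((a - (r : ℂ) • 1) * p)).re ≤ (τ (cfc (fun x : ℝ => max (x - r) 0) a)).re := by
  set h := cfc (fun x : ℝ => max (x - r) 0) a with hh
  have hh0 : 0 ≤ h := cfc_nonneg fun x _ => le_max_right _ _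
  have hle : a - (r : ℂ) • 1 ≤ h := by
    rw [ha.sub_smul_one_eq_cfc]
    exact cfc_mono fun x _ => le_max_left _ _
  have h1 := hτ.re_mul_projection_nonneg (sub_nonneg.2 hle) hp hpp
  have hq : IsSelfAdjoint (1 - p) := (IsSelfAdjoint.one A).sub hp
  have hqq : (1 - p) * (1 - p) = 1 - p := IsIdempotentElem.one_sub hpp
  have h2 := hτ.re_mul_projection_nonneg hh0 hq hqq
  rw [sub_mul, map_sub, Complex.sub_re] at h1
  rw [mul_sub, mul_one, map_sub, Complex.sub_re] at h2
  linarith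

theorem re_cfc_add {B : Type*} [CStarAlgebra B] (τ : B →ₗ[ℂ] ℂ) {f g : ℝ → ℝ}
    (hf : Continuous f) (hg : Continuous g) (k : ℝ) (a : B) :
    (τ (cfc (fun x => f x + k * g x) a)).re = (τ (cfc f a)).re + k * (τ (cfc g a)).re := by
  rw [cfc_add a f (fun x => k * g x) hf.continuousOn (hg.const_smul k).continuousOn,
    cfc_const_mul k g a hg.continuousOn, map_add, Complex.add_re,
    ← Complex.coe_smul k, map_smul, smul_eq_mul, Complex.re_ofReal_mul]

theorem re_cfc_affine (hτ : IsFiniteTrace τ) {a : A} (ha : IsSelfAdjoint a) (p q : ℝ) :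
    (τ (cfc (fun x => p + q * x) a)).re = p + q * (τ a).re := by
  rw [re_cfc_add τ continuous_const continuous_id' q a, cfc_id' ℝ a, cfc_const p a,
    Algebra.algebraMap_eq_smul_one, ← Complex.coe_smul p, map_smul, hτ.normalized]
  simp

/-- If `g` is within `ε` of `f` on the spectrum, the traces differ by at most `ε`. -/
theorem abs_re_cfc_sub_le (hτ : IsFiniteTrace τ) {a : A} (ha : IsSelfAdjoint a) {f g : ℝ → ℝ}
    (hf : ContinuousOn f (spectrum ℝ a)) (hg : ContinuousOn g (spectrum ℝ a)) {ε : ℝ}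
    (h : ∀ x ∈ spectrum ℝ a, |g x - f x| ≤ ε) :
    |(τ (cfc g a)).re - (τ (cfc f a)).re| ≤ ε := by
  have haux : ∀ c : ℝ, (τ (cfc (fun _ : ℝ => c) a)).re = c := fun c => by
    simpa using hτ.re_cfc_affine ha c 0
  rw [← Complex.sub_re, ← map_sub, ← cfc_sub g f a hg hf, abs_le]
  constructor
  · rw [← haux (-ε)]
    exact hτ.re_mono (cfc_mono (fun x hx => (abs_le.1 (h x hx)).1) continuousOn_const
      (hg.sub hf))
  · conv_rhs => rw [← haux ε]
    exact hτ.re_mono (cfc_mono (fun x hx => (abs_le.1 (h x hx)).2) (hg.sub hf)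
      continuousOn_const)

/-- Domination of the traces of hinges passes to all convex functions. -/
theorem re_cfc_le_of_convexOn (hτ : IsFiniteTrace τ) {a b : A} (ha : IsSelfAdjoint a)
    (hb : IsSelfAdjoint b) (hab : τ a = τ b)
    (hinge : ∀ r, (τ (cfc (fun x : ℝ => max (x - r) 0) a)).re ≤
      (τ (cfc (fun x : ℝ => max (x - r) 0) b)).re)
    {c d : ℝ} {f : ℝ → ℝ} (hsp : spectrum ℝ a ∪ spectrum ℝ b ⊆ Set.Ioo c d)
    (hf : ConvexOn ℝ (Set.Ioo c d) f) : (τ (cfc f a)).re ≤ (τ (cfc f b)).re := by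
  have : Nontrivial A := by
    refine ⟨1, 0, fun h => ?_⟩
    simpa [h] using hτ.normalized
  set K := spectrum ℝ a ∪ spectrum ℝ b with hK
  have hKne : K.Nonempty :=
    (ContinuousFunctionalCalculus.spectrum_nonempty a ha).mono Set.subset_union_left
  have hKc : IsCompact K := (spectrum.isCompact a).union (spectrum.isCompact b)
  obtain ⟨m, hcm, hmK⟩ := exists_between (hsp (hKc.sInf_mem hKne)).1
  obtain ⟨M, hKM, hMd⟩ := exists_between (hsp (hKc.sSup_mem hKne)).2
  have hmM : m < M := hmK.trans_le ((Real.sInf_le_sSup K hKc.bddBelow hKc.bddAbove).trans hKM.le)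
  have hKmM : K ⊆ Set.Icc m M := fun x hx =>
    ⟨hmK.le.trans (csInf_le hKc.bddBelow hx), (le_csSup hKc.bddAbove hx).trans hKM.le⟩
  have hsub : Set.Icc m M ⊆ Set.Ioo c d := fun x hx => ⟨hcm.trans_le hx.1, hx.2.trans_lt hMd⟩
  have hfc : ContinuousOn f (Set.Icc m M) := (hf.continuousOn isOpen_Ioo).mono hsub
  have haK : spectrum ℝ a ⊆ Set.Icc m M := Set.subset_union_left.trans hKmM
  have hbK : spectrum ℝ b ⊆ Set.Icc m M := Set.subset_union_right.trans hKmM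
  refine le_of_forall_pos_le_add fun ε hε => ?_
  obtain ⟨g, ⟨hgc, hgab⟩, hg⟩ := (hf.subset hsub (convex_Icc m M)).exists_hinge_approx hmM hfc
    (C := fun g => Continuous g ∧ (τ (cfc g a)).re ≤ (τ (cfc g b)).re)
    (fun p q => ⟨by fun_prop, by rw [hτ.re_cfc_affine ha, hτ.re_cfc_affine hb, hab]⟩)
    (fun g hg k r hk => ⟨by have := hg.1; fun_prop, by
      rw [re_cfc_add τ hg.1 (by fun_prop), re_cfc_add τ hg.1 (by fun_prop)]
      exact add_le_add hg.2 (mul_le_mul_of_nonneg_left (hinge r) hk)⟩)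
    (half_pos hε)
  have h1 := hτ.abs_re_cfc_sub_le ha (hfc.mono haK) hgc.continuousOn fun x hx => hg x (haK hx)
  have h2 := hτ.abs_re_cfc_sub_le hb (hfc.mono hbK) hgc.continuousOn fun x hx => hg x (hbK hx)
  rw [abs_le] at h1 h2
  linarith [h1.1, h2.2]

end IsFiniteTrace

namespace IsSpectralResolution

variable {τ : A →ₗ[ℂ] ℂ} {a : A} {e : ℝ → A}

theorem isBoundedDistribution (he : IsSpectralResolution τ a e) (hτ : IsFiniteTrace τ) :
    IsBoundedDistribution (fun s => (τ (e s)).re) ‖a‖ where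
  mono _ _ h := hτ.re_mono (he.mono h)
  bot s hs := by simp [he.bot s hs]
  top s hs := by simp [he.top s hs, hτ.normalized]
  rightCont := he.rightCont

theorem cfc_hinge_eq (he : IsSpectralResolution τ a e) (ha : IsSelfAdjoint a) (r : ℝ) :
    cfc (fun x : ℝ => max (x - r) 0) a = (a - (r : ℂ) • 1) * (1 - e r) := by
  have hpart : cfc (fun x : ℝ => max (x - r) 0) a = (a - (r : ℂ) • 1)⁺ := by
    rw [CFC.posPart_def, cfcₙ_eq_cfc (by fun_prop) (by simp), ha.sub_smul_one_eq_cfc]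
    exact cfc_comp (fun x : ℝ => x⁺) (fun x : ℝ => x - r) a
  rw [hpart]
  refine (CFC.posPart_negPart_unique (b := (a - (r : ℂ) • 1) * (1 - e r))
    (c := -((a - (r : ℂ) • 1) * e r)) ?_ ?_ ?_ ?_).1
  · noncomm_ring
  · have hcomm : (1 - e r) * (a - (r : ℂ) • 1) = (a - (r : ℂ) • 1) * (1 - e r) := by
      simp only [mul_sub, sub_mul, one_mul, mul_one, he.comm r, smul_mul_assoc, mul_smul_comm, smul_sub]
      abel
    have hzero : (1 - e r) * e r = 0 := by rw [sub_mul, one_mul, he.idem, sub_self]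
    rw [mul_neg, mul_assoc, ← mul_assoc (1 - e r), hcomm, mul_assoc, hzero]
    simp
  · have := he.above r
    rw [← sub_nonneg] at this
    rwa [sub_mul, smul_mul_assoc, one_mul]
  · have := he.below r
    rw [← sub_nonneg] at this
    rwa [sub_mul, smul_mul_assoc, one_mul, neg_sub]

theorem re_cfc_hinge_eq (he : IsSpectralResolution τ a e) (hτ : IsFiniteTrace τ)
    (ha : IsSelfAdjoint a) (r : ℝ) :
    (τ (cfc (fun x : ℝ => max (x - r) 0) a)).re =
      ∫ t in (0 : ℝ)..1, max (spectralScale τ e t - r) 0 := by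
  refine (he.isBoundedDistribution hτ).eq_integral_hinge
    (φ := fun r => (τ (cfc (fun x : ℝ => max (x - r) 0) a)).re) ?_ (fun r r' => ?_) r
  · simp [he.cfc_hinge_eq ha, he.top _ le_rfl]
  · have hq : IsSelfAdjoint (1 - e r') := (IsSelfAdjoint.one A).sub (he.selfAdjoint r')
    have hqq : (1 - e r') * (1 - e r') = 1 - e r' := IsIdempotentElem.one_sub (he.idem r')
    have h := hτ.re_sub_mul_projection_le ha hq hqq r
    have hdiff : (τ ((a - (r : ℂ) • 1) * (1 - e r'))).re -
        (τ ((a - (r' : ℂ) • 1) * (1 - e r'))).re = (r' - r) * (1 - (τ (e r')).re) := by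
      rw [← Complex.sub_re, ← map_sub, ← sub_mul, sub_sub_sub_cancel_left, ← sub_smul,
        smul_mul_assoc, one_mul, map_smul, map_sub, hτ.normalized, smul_eq_mul,
        ← Complex.ofReal_sub, Complex.re_ofReal_mul]
      simp
    rw [he.cfc_hinge_eq ha r']
    linarith

end IsSpectralResolution

/-- Hiai's characterization: `a ≺ b` iff `τ(f(a)) ≤ τ(f(b))` for every function `f`
convex on an open interval containing both spectra. -/
theorem specMajorization_iff_convex_trace_ineq
    (τ : A →ₗ[ℂ] ℂ) (hτ : IsII1Trace τ) (a b : A)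
    (ha : IsSelfAdjoint a) (hb : IsSelfAdjoint b)
    (ea eb : ℝ → A) (hea : IsSpectralResolution τ a ea) (heb : IsSpectralResolution τ b eb) :
    (τ a = τ b ∧ ∀ s ∈ Set.Ico (0:ℝ) 1,
        ∫ t in (0:ℝ)..s, spectralScale τ ea t ≤ ∫ t in (0:ℝ)..s, spectralScale τ eb t) ↔
      ∀ (c d : ℝ) (f : ℝ → ℝ),
        spectrum ℝ a ∪ spectrum ℝ b ⊆ Set.Ioo c d → ConvexOn ℝ (Set.Ioo c d) f →
          τ (cfc f a) ≤ τ (cfc f b) := by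
  have hfin := hτ.toIsFiniteTrace
  have hinge_iff := (hea.isBoundedDistribution hfin).forall_integral_le_iff
    (heb.isBoundedDistribution hfin)
  have hea_hinge := hea.re_cfc_hinge_eq hfin ha
  have heb_hinge := heb.re_cfc_hinge_eq hfin hb
  constructor
  · rintro ⟨hab, hmaj⟩ c d f hsp hf
    refine Complex.le_def.2 ⟨hfin.re_cfc_le_of_convexOn ha hb hab (fun r => ?_) hsp hf, ?_⟩
    · rw [hea_hinge, heb_hinge]
      exact hinge_iff.1 hmaj r
    · rw [hfin.im_eq_zero (cfc_predicate f a), hfin.im_eq_zero (cfc_predicate f b)]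
  · intro h
    obtain ⟨R, hR⟩ := ((spectrum.isCompact (𝕜 := ℝ) a).union
      (spectrum.isCompact b)).isBounded.subset_ball 0
    rw [Real.ball_eq_Ioo] at hR
    have hconv : ∀ f : ℝ → ℝ, ConvexOn ℝ Set.univ f → (τ (cfc f a)).re ≤ (τ (cfc f b)).re :=
      fun f hf => (Complex.le_def.1
        (h _ _ f hR (hf.subset (Set.subset_univ _) (convex_Ioo _ _)))).1
    have haff : ∀ p q : ℝ, ConvexOn ℝ Set.univ fun x : ℝ => p + q * x := fun p q =>
      ⟨convex_univ, fun x _ y _ s t _ _ hst => le_of_eq (by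
        simp only [smul_eq_mul]; linear_combination (-p) * hst)⟩
    refine ⟨Complex.ext (le_antisymm ?_ ?_) ?_, hinge_iff.2 fun r => ?_⟩
    · have := hconv _ (haff 0 1)
      rw [hfin.re_cfc_affine ha, hfin.re_cfc_affine hb] at this
      linarith
    · have := hconv _ (haff 0 (-1))
      rw [hfin.re_cfc_affine ha, hfin.re_cfc_affine hb] at this
      linarith
    · rw [hfin.im_eq_zero ha, hfin.im_eq_zero hb]
    · have hr := hconv (fun x => max (x - r) 0) (by
        have := (haff (-r) 1).sup (haff 0 0)
        refine this.congr fun x _ => ?_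
        simp [sub_eq_neg_add])
      rw [hea_hinge, heb_hinge] at hr
      exact hr
end
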